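/- arXiv:math/0310216 — 2 statements merged into one kernel-verified Lean document; each statement's English description precedes it below -/
import Mathlib

section
/- Let p, q ≥ 2 be coprime integers. Then Θ_{p,q}(s₁, s₂, (s₁s₂)^{−1}), a priori an element of the field ℚ(s₁, s₂), is a Laurent polynomial in t₁ = s₁² and t₂ = s₂² with integer coefficients; i.e. it lies in the subring ℤ[s₁^{±2}, s₂^{±2}] of ℚ(s₁, s₂). (This is the statement that the 2-loop polynomial of the torus knot T(p,q) is a polynomial with integer coefficients.) -/
/-- `Δ_{p,q}(s) = ((s^{pq} − s^{−pq})(s − s^{−1})) / ((s^p − s^{−p})(s^q − s^{−q}))`,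
the Alexander polynomial of the `(p,q)` torus knot evaluated at `t = s²`. -/
noncomputable def torusDelta {F : Type*} [Field F] (p q : ℕ) (s : F) : F :=
  ((s ^ (p * q) - s⁻¹ ^ (p * q)) * (s - s⁻¹)) / ((s ^ p - s⁻¹ ^ p) * (s ^ q - s⁻¹ ^ q))

/-- `φ_{p,q}(s) = (s^p + s^{−p})/(s^p − s^{−p}) − q·(s^{pq} + s^{−pq})/(s^{pq} − s^{−pq})`. -/
noncomputable def torusPhi {F : Type*} [Field F] (p q : ℕ) (s : F) : F :=
  (s ^ p + s⁻¹ ^ p) / (s ^ p - s⁻¹ ^ p) -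
    (q : F) * ((s ^ (p * q) + s⁻¹ ^ (p * q)) / (s ^ (p * q) - s⁻¹ ^ (p * q)))

/-- `ψ_{p,q}(s) = Δ_{p,q}(s)·φ_{p,q}(s)`. -/
noncomputable def torusPsi {F : Type*} [Field F] (p q : ℕ) (s : F) : F :=
  torusDelta p q s * torusPhi p q s

/-- The 2-loop polynomial of the torus knot `T(p,q)`:
`Θ_{p,q}(s₁,s₂,s₃) = −(1/4)·Σ_{(i,j,k)} ψ_{p,q}(s_i)·ψ_{q,p}(s_j)·Δ_{p,q}(s_k)`,
the sum running over all six permutations `(i,j,k)` of `(1,2,3)`. -/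
noncomputable def torusTheta {F : Type*} [Field F] (p q : ℕ) (s₁ s₂ s₃ : F) : F :=
  -(1/4) * (torusPsi p q s₁ * torusPsi q p s₂ * torusDelta p q s₃
    + torusPsi p q s₁ * torusPsi q p s₃ * torusDelta p q s₂
    + torusPsi p q s₂ * torusPsi q p s₁ * torusDelta p q s₃
    + torusPsi p q s₂ * torusPsi q p s₃ * torusDelta p q s₁
    + torusPsi p q s₃ * torusPsi q p s₁ * torusDelta p q s₂
    + torusPsi p q s₃ * torusPsi q p s₂ * torusDelta p q s₁)

/-- The reduced 2-loop polynomial of the torus knot `T(p,q)`: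
`Θ̂_{p,q}(s) = ψ_{p,q}(s)·ψ_{q,p}(s) / (2(s − s^{−1})²)`. -/
noncomputable def torusThetaHat {F : Type*} [Field F] (p q : ℕ) (s : F) : F :=
  torusPsi p q s * torusPsi q p s / (2 * (s - s⁻¹) ^ 2)

/-!
Write `[n]_x = 1 + x + ⋯ + x ^ (n - 1)` and `t = s ^ 2`. Then `φ_{p,q} = 2 A_{p,q} - (q - 1)`, where
`A_{p,q}` has denominator `[q]_u` at `u = t ^ p`, and both `[q]_t Δ` and `[q]_t Δ A_{p,q}` are
integral Laurent polynomials in `t`. In the variables `t₁ t₂ t₃ = 1`, the quadratic part of `Θ` is a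
sum of terms `Δ Δ Δ A_{q,p}(t₃) (A_{p,q}(t₁) + A_{p,q}(t₂) - (q - 1))`. The second factor is
`(1 - u v) M / ([q]_u [q]_v)` at `u = t₁ ^ p` and `v = t₂ ^ p`, with `M` an integral polynomial, and
`1 - u v = 1 - t₃ ^ (-p)` is divisible by `[p]_{t₃}`, which cancels the pole of `A_{q,p}(t₃)`.
Hence `[q]_{t₁} [q]_{t₂} [q]_{t₃} Θ` is integral. As `Θ` is symmetric in `p` and `q`, so is
`[p]_{t₁} [p]_{t₂} [p]_{t₃} Θ`. These two denominators are relatively prime: `[p]_t` and `[q]_t`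
generate the unit ideal because `p` and `q` are coprime, and `[p]_{tᵢ}`, `[q]_{tⱼ}` with `i ≠ j` are
monic polynomials in independent variables.
-/

section QNumber

open Finset

variable {R : Type*} [CommRing R]

/-- The `q`-analogue `[n] = 1 + x + ⋯ + x ^ (n - 1)` of the natural number `n`, at `q = x`. -/
def qNumber (n : ℕ) (x : R) : R := ∑ i ∈ range n, x ^ i

/-- The quotient of `qNumber n x - n` by `x - 1`, as an explicit polynomial in `x`. -/
def qNumberSlope (n : ℕ) (x : R) : R := ∑ i ∈ range n, qNumber i x

/-- The quotient of `n [n]_{xy} - [n]_x [n]_y` by `(x - 1) (y - 1)`, as an explicit polynomial in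
`x` and `y`. -/
def qNumberDefect (n : ℕ) (x y : R) : R :=
  ∑ j ∈ range n, ∑ i ∈ range j, (x * y) ^ i * (qNumber (j - i) x * qNumber (j - i) y)

theorem qNumber_mul_sub_one (n : ℕ) (x : R) : qNumber n x * (x - 1) = x ^ n - 1 :=
  geom_sum_mul x n

theorem qNumber_add (m n : ℕ) (x : R) : qNumber (m + n) x = qNumber m x + x ^ m * qNumber n x := by
  simp only [qNumber, sum_range_add, mul_sum, pow_add]

theorem map_qNumber {S : Type*} [CommRing S] (f : R →+* S) (n : ℕ) (x : R) :
    f (qNumber n x) = qNumber n (f x) := by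
  simp only [qNumber, map_sum, map_pow]

theorem isCoprime_qNumber_add_mul {m n : ℕ} {x : R} (h : IsCoprime (qNumber m x) (qNumber n x))
    (k : ℕ) : IsCoprime (qNumber m x) (qNumber (n + m * k) x) := by
  induction k with
  | zero => exact h
  | succ k ih =>
    rw [mul_add_one, ← add_assoc, qNumber_add, mul_comm (x ^ _)]
    exact IsCoprime.add_mul_left_right_iff.2 ih

theorem isCoprime_qNumber {m n : ℕ} (h : Nat.Coprime m n) (x : R) :
    IsCoprime (qNumber m x) (qNumber n x) := by
  induction m, n using Nat.gcd.induction with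
  | H0 n =>
    obtain rfl : n = 1 := by simpa using h
    simpa [qNumber] using isCoprime_one_right
  | H1 m n _ ih =>
    have := isCoprime_qNumber_add_mul (ih (by rwa [Nat.Coprime, ← Nat.gcd_rec])).symm (n / m)
    rwa [Nat.mod_add_div] at this

theorem sum_sum_sub_mul_sub (f g : ℕ → R) (n : ℕ) :
    ∑ j ∈ range n, ∑ i ∈ range j, (f j - f i) * (g j - g i) =
      n * ∑ i ∈ range n, f i * g i - (∑ i ∈ range n, f i) * ∑ i ∈ range n, g i := by
  induction n with
  | zero => simp
  | succ n ih =>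
    have expand (i : ℕ) :
        (f n - f i) * (g n - g i) = f n * g n - f n * g i - g n * f i + f i * g i := by ring
    simp only [sum_range_succ _ n, ih, expand, sum_add_distrib, sum_sub_distrib, sum_const,
      card_range, nsmul_eq_mul, ← mul_sum]
    push_cast
    ring

theorem qNumberSlope_mul_sub_one (n : ℕ) (x : R) :
    qNumberSlope n x * (x - 1) = qNumber n x - n := by
  simp only [qNumberSlope, sum_mul, qNumber_mul_sub_one, sum_sub_distrib, sum_const, card_range,
    nsmul_one]
  rfl

theorem qNumberDefect_mul_sub_one_mul_sub_one (n : ℕ) (x y : R) :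
    qNumberDefect n x y * ((x - 1) * (y - 1)) =
      n * qNumber n (x * y) - qNumber n x * qNumber n y := by
  have pow_sub_pow {i j : ℕ} (hij : i ≤ j) (z : R) :
      z ^ i * (qNumber (j - i) z * (z - 1)) = z ^ j - z ^ i := by
    rw [qNumber_mul_sub_one, mul_sub_one, pow_mul_pow_sub z hij]
  simp only [qNumber, mul_pow, ← sum_sum_sub_mul_sub]
  simp only [qNumberDefect, sum_mul]
  refine sum_congr rfl fun j _ ↦ sum_congr rfl fun i hi ↦ ?_
  have hij := (mem_range.1 hi).le
  rw [← pow_sub_pow hij x, ← pow_sub_pow hij y]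
  ring

theorem qNumberSlope_mul_qNumber_add [IsDomain R] {n : ℕ} {x y : R} (hx : x ≠ 1) (hy : y ≠ 1) :
    qNumberSlope n x * qNumber n y + qNumberSlope n y * qNumber n x
      - (n - 1) * (qNumber n x * qNumber n y) = (1 - x * y) * qNumberDefect n x y := by
  apply mul_right_cancel₀ (mul_ne_zero (sub_ne_zero.2 hx) (sub_ne_zero.2 hy))
  have hx := qNumber_mul_sub_one n x
  have hy := qNumber_mul_sub_one n y
  have hxy := qNumber_mul_sub_one n (x * y)
  rw [mul_pow] at hxy
  linear_combination (y - 1) * qNumber n y * qNumberSlope_mul_sub_one n x +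
    (x - 1) * qNumber n x * qNumberSlope_mul_sub_one n y -
    (1 - x * y) * qNumberDefect_mul_sub_one_mul_sub_one n x y +
    n * (hxy - (hx * (qNumber n y * (y - 1)) + (x ^ n - 1) * hy + hx + hy))

theorem qNumber_ne_zero {n : ℕ} {x : R} (h : x ^ n ≠ 1) : qNumber n x ≠ 0 :=
  left_ne_zero_of_mul (qNumber_mul_sub_one n x ▸ sub_ne_zero.2 h)

end QNumber

section TorusFunctions

variable {F : Type*} [Field F] {p q : ℕ} {s : F}

/-- The genus `(p - 1) (q - 1) / 2` of the torus knot `T(p,q)`. -/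
def torusGenus (p q : ℕ) : ℕ := (p - 1) * (q - 1) / 2

/-- The polar part of `torusPhi p q` as a function of `t = s ^ 2`: see `torusPhi_eq`. Its
denominator is a geometric sum rather than `t ^ (p * q) - 1`, so it has no pole at `t ^ p = 1`. -/
def torusPole (p q : ℕ) (t : F) : F := qNumberSlope q (t ^ p) / qNumber q (t ^ p)

theorem add_two_mul_torusGenus (hpq : p.Coprime q) :
    p + q + 2 * torusGenus p q = p * q + 1 := by
  have even : 2 ∣ (p - 1) * (q - 1) := by
    rw [Nat.Prime.dvd_mul Nat.prime_two]
    by_contra!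
    have : 2 ∣ p.gcd q := Nat.dvd_gcd (by omega) (by omega)
    rw [hpq] at this
    omega
  rw [torusGenus, Nat.mul_div_cancel' even]
  rcases p with _ | p
  · simp_all
  rcases q with _ | q
  · simp_all
  simp only [Nat.add_sub_cancel]
  ring

theorem pow_sub_inv_pow (hs : s ≠ 0) (n : ℕ) : s ^ n - s⁻¹ ^ n = ((s ^ 2) ^ n - 1) / s ^ n := by
  rw [inv_pow]
  field_simp
  ring

theorem pow_add_inv_pow (hs : s ≠ 0) (n : ℕ) : s ^ n + s⁻¹ ^ n = ((s ^ 2) ^ n + 1) / s ^ n := by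
  rw [inv_pow]
  field_simp
  ring

theorem pow_left_ne_one_of_pow_mul_ne_one {t : F} (h : t ^ (p * q) ≠ 1) : t ^ p ≠ 1 :=
  fun hp ↦ h (by rw [pow_mul, hp, one_pow])

theorem torusPhi_eq (hs : s ≠ 0) (h : (s ^ 2) ^ (p * q) ≠ 1) :
    torusPhi p q s = 2 * torusPole p q (s ^ 2) - (q - 1) := by
  have hp := sub_ne_zero.2 (pow_left_ne_one_of_pow_mul_ne_one h)
  rw [pow_mul] at h
  have hq := qNumber_ne_zero h
  simp only [torusPhi, torusPole, pow_sub_inv_pow hs, pow_add_inv_pow hs]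
  rw [div_div_div_cancel_right₀ (pow_ne_zero _ hs), div_div_div_cancel_right₀ (pow_ne_zero _ hs),
    pow_mul, ← qNumber_mul_sub_one q]
  have slope := qNumberSlope_mul_sub_one q ((s ^ 2) ^ p)
  have pow_eq := qNumber_mul_sub_one q ((s ^ 2) ^ p)
  generalize (s ^ 2) ^ p = u at *
  have hu : u ^ q = qNumber q u * (u - 1) + 1 := by rw [pow_eq]; ring
  rw [hu]
  field_simp
  linear_combination -2 * slope

theorem torusDelta_comm (p q : ℕ) (s : F) : torusDelta p q s = torusDelta q p s := by
  simp only [torusDelta, mul_comm]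

theorem torusTheta_comm (p q : ℕ) (x y z : F) : torusTheta p q x y z = torusTheta q p x y z := by
  simp only [torusTheta, torusPsi, torusDelta_comm p q]
  ring

theorem qNumber_mul_torusDelta (hpq : p.Coprime q) (hs : s ≠ 0) (h : (s ^ 2) ^ (p * q) ≠ 1) :
    qNumber q (s ^ 2) * torusDelta p q s =
      (s ^ 2)⁻¹ ^ torusGenus p q * qNumber q ((s ^ 2) ^ p) := by
  have hp := sub_ne_zero.2 (pow_left_ne_one_of_pow_mul_ne_one h)
  have hq := sub_ne_zero.2 (pow_left_ne_one_of_pow_mul_ne_one (mul_comm p q ▸ h))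
  have ht : (s ^ 2) ^ torusGenus p q ≠ 0 := pow_ne_zero _ (pow_ne_zero _ hs)
  have genus : s ^ (p * q) * s = s ^ p * s ^ q * (s ^ 2) ^ torusGenus p q := by
    rw [← pow_succ, ← add_two_mul_torusGenus hpq, pow_add, pow_add, pow_mul]
  have h1 : s - s⁻¹ = (s ^ 2 - 1) / s := by simpa using pow_sub_inv_pow hs 1
  rw [torusDelta, h1, pow_sub_inv_pow hs, pow_sub_inv_pow hs, pow_sub_inv_pow hs,
    div_mul_div_comm, div_mul_div_comm, genus, div_div_div_eq, pow_mul,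
    ← qNumber_mul_sub_one q ((s ^ 2) ^ p), inv_pow]
  rw [← qNumber_mul_sub_one q (s ^ 2)] at hq ⊢
  have := left_ne_zero_of_mul hq
  have := right_ne_zero_of_mul hq
  field_simp

theorem qNumber_mul_torusDelta_mul_torusPole (hpq : p.Coprime q) (hs : s ≠ 0)
    (h : (s ^ 2) ^ (p * q) ≠ 1) :
    qNumber q (s ^ 2) * (torusDelta p q s * torusPole p q (s ^ 2)) =
      (s ^ 2)⁻¹ ^ torusGenus p q * qNumberSlope q ((s ^ 2) ^ p) := by
  rw [← mul_assoc, qNumber_mul_torusDelta hpq hs h, torusPole, mul_assoc,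
    mul_div_cancel₀ _ (qNumber_ne_zero (pow_mul (s ^ 2) p q ▸ h))]

theorem qNumber_mul_torusPole_add {x y : F} (hx : x ^ (p * q) ≠ 1) (hy : y ^ (p * q) ≠ 1) :
    qNumber q (x ^ p) * qNumber q (y ^ p) * (torusPole p q x + torusPole p q y - (q - 1)) =
      (1 - (x * y) ^ p) * qNumberDefect q (x ^ p) (y ^ p) := by
  have hx_pole := qNumber_ne_zero (pow_mul x p q ▸ hx)
  have hy_pole := qNumber_ne_zero (pow_mul y p q ▸ hy)
  rw [mul_pow, ← qNumberSlope_mul_qNumber_add (pow_left_ne_one_of_pow_mul_ne_one hx)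
    (pow_left_ne_one_of_pow_mul_ne_one hy), torusPole, torusPole]
  field_simp

theorem one_sub_pow_eq_of_mul_eq_one {u t : F} (hut : u * t = 1) (n : ℕ) :
    1 - u ^ n = u ^ n * (t - 1) * qNumber n t := by
  have hn : u ^ n * t ^ n = 1 := by rw [← mul_pow, hut, one_pow]
  linear_combination -hn - u ^ n * qNumber_mul_sub_one n t

theorem torusTheta_eq (h2 : (2 : F) ≠ 0) (hpq : p.Coprime q) {x y z : F} (hx0 : x ≠ 0)
    (hy0 : y ≠ 0) (hz0 : z ≠ 0) (hx : (x ^ 2) ^ (p * q) ≠ 1) (hy : (y ^ 2) ^ (p * q) ≠ 1)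
    (hz : (z ^ 2) ^ (p * q) ≠ 1) :
    torusTheta p q x y z = -(torusDelta p q x * torusDelta p q y * torusDelta p q z) *
      (torusPole q p (x ^ 2) * (torusPole p q (y ^ 2) + torusPole p q (z ^ 2) - (q - 1)) +
        torusPole q p (y ^ 2) * (torusPole p q (z ^ 2) + torusPole p q (x ^ 2) - (q - 1)) +
        torusPole q p (z ^ 2) * (torusPole p q (x ^ 2) + torusPole p q (y ^ 2) - (q - 1)) -
        (p - 1) * (torusPole p q (x ^ 2) + torusPole p q (y ^ 2) + torusPole p q (z ^ 2)) +
        3 * torusGenus p q) := by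
  have genus : (p + q + 2 * torusGenus p q : F) = p * q + 1 :=
    mod_cast congrArg (Nat.cast (R := F)) (add_two_mul_torusGenus hpq)
  have h4 : (4 : F) ≠ 0 := by
    rw [show (4 : F) = 2 * 2 by norm_num]
    exact mul_ne_zero h2 h2
  simp only [torusTheta, torusPsi, torusDelta_comm q p, torusPhi_eq hx0 hx, torusPhi_eq hy0 hy,
    torusPhi_eq hz0 hz, torusPhi_eq hx0 (mul_comm p q ▸ hx), torusPhi_eq hy0 (mul_comm p q ▸ hy),
    torusPhi_eq hz0 (mul_comm p q ▸ hz)]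
  field_simp
  linear_combination 6 * torusDelta p q x * torusDelta p q y * torusDelta p q z * genus

end TorusFunctions

section Integrality

open Finset

variable {F : Type*} [Field F] {R : Subring F} {p q : ℕ}

/-- `a` and `b` are relatively prime as denominators: every element of `F` which both of them
multiply into `R` lies in `R`. -/
def AreSeparated (R : Subring F) (a b : F) : Prop := ∀ x, a * x ∈ R → b * x ∈ R → x ∈ R

/-- The square of `s` is a unit of `R` and `s` is not a pole of the functions entering
`torusTheta p q`. -/
structure IsTorusRegular (R : Subring F) (p q : ℕ) (s : F) : Prop where
  ne_zero : s ≠ 0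
  sq_mem : s ^ 2 ∈ R
  sq_inv_mem : (s ^ 2)⁻¹ ∈ R
  pow_ne_one : (s ^ 2) ^ (p * q) ≠ 1

theorem IsTorusRegular.swap {s : F} (hs : IsTorusRegular R p q s) : IsTorusRegular R q p s :=
  { hs with pow_ne_one := mul_comm p q ▸ hs.pow_ne_one }

theorem AreSeparated.symm {a b : F} (h : AreSeparated R a b) : AreSeparated R b a :=
  fun x hb ha ↦ h x ha hb

theorem AreSeparated.prod_right {ι : Type*} {a : F} {s : Finset ι} {f : ι → F}
    (hf : ∀ i ∈ s, f i ∈ R) (h : ∀ i ∈ s, AreSeparated R a (f i)) :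
    AreSeparated R a (∏ i ∈ s, f i) := by
  induction s using Finset.cons_induction with
  | empty => exact fun x _ hx ↦ by simpa using hx
  | cons i s hi ih =>
    simp only [mem_cons, forall_eq_or_imp] at hf h
    intro x hax hfx
    rw [prod_cons, mul_assoc] at hfx
    refine ih hf.2 h.2 x hax (h.1 _ ?_ hfx)
    rw [mul_left_comm]
    exact mul_mem (prod_mem hf.2) hax

theorem qNumber_mem {x : F} (hx : x ∈ R) (n : ℕ) : qNumber n x ∈ R :=
  sum_mem fun _ _ ↦ pow_mem hx _

theorem qNumberSlope_mem {x : F} (hx : x ∈ R) (n : ℕ) : qNumberSlope n x ∈ R :=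
  sum_mem fun _ _ ↦ qNumber_mem hx _

theorem qNumberDefect_mem {x y : F} (hx : x ∈ R) (hy : y ∈ R) (n : ℕ) :
    qNumberDefect n x y ∈ R :=
  sum_mem fun _ _ ↦ sum_mem fun _ _ ↦
    mul_mem (pow_mem (mul_mem hx hy) _) (mul_mem (qNumber_mem hx _) (qNumber_mem hy _))

theorem areSeparated_qNumber_of_coprime (hpq : p.Coprime q) {t : F} (ht : t ∈ R) :
    AreSeparated R (qNumber p t) (qNumber q t) := by
  intro x hpx hqx
  obtain ⟨a, b, hab⟩ := isCoprime_qNumber hpq (⟨t, ht⟩ : R)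
  have bezout : (a : F) * qNumber p t + b * qNumber q t = 1 := by
    have := congrArg R.subtype hab
    rwa [map_add, map_mul, map_mul, map_qNumber, map_qNumber, map_one] at this
  rw [← one_mul x, ← bezout, add_mul, mul_assoc, mul_assoc]
  exact add_mem (mul_mem a.2 hpx) (mul_mem b.2 hqx)

theorem qNumber_mul_torusDelta_mem (hpq : p.Coprime q) {s : F} (hs : IsTorusRegular R p q s) :
    qNumber q (s ^ 2) * torusDelta p q s ∈ R := by
  rw [qNumber_mul_torusDelta hpq hs.ne_zero hs.pow_ne_one]
  exact mul_mem (pow_mem hs.sq_inv_mem _) (qNumber_mem (pow_mem hs.sq_mem _) _)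

theorem qNumber_mul_torusDelta_mul_torusPole_mem (hpq : p.Coprime q) {s : F}
    (hs : IsTorusRegular R p q s) :
    qNumber q (s ^ 2) * (torusDelta p q s * torusPole p q (s ^ 2)) ∈ R := by
  rw [qNumber_mul_torusDelta_mul_torusPole hpq hs.ne_zero hs.pow_ne_one]
  exact mul_mem (pow_mem hs.sq_inv_mem _) (qNumberSlope_mem (pow_mem hs.sq_mem _) _)

-- The pole of `torusPole q p` in `z` is cancelled by the factor `qNumber p (z ^ 2)` of
-- `1 - (x ^ 2 * y ^ 2) ^ p`.
theorem torusPole_mul_torusPole_add_mem (hpq : p.Coprime q) {x y z : F}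
    (hx : IsTorusRegular R p q x) (hy : IsTorusRegular R p q y) (hz : IsTorusRegular R p q z)
    (hxyz : x * y * z = 1) :
    qNumber q (x ^ 2) * qNumber q (y ^ 2) *
      (torusDelta p q x * torusDelta p q y * torusDelta p q z * (torusPole q p (z ^ 2) *
        (torusPole p q (x ^ 2) + torusPole p q (y ^ 2) - (q - 1)))) ∈ R := by
  have hsq : x ^ 2 * y ^ 2 * z ^ 2 = 1 := by rw [← mul_pow, ← mul_pow, hxyz, one_pow]
  have hxΔ := qNumber_mul_torusDelta hpq hx.ne_zero hx.pow_ne_one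
  have hyΔ := qNumber_mul_torusDelta hpq hy.ne_zero hy.pow_ne_one
  have hpole := qNumber_mul_torusPole_add hx.pow_ne_one hy.pow_ne_one
  have hz_factor := one_sub_pow_eq_of_mul_eq_one hsq p
  have cancel_pole : qNumber q (x ^ 2) * qNumber q (y ^ 2) *
      (torusDelta p q x * torusDelta p q y * torusDelta p q z * (torusPole q p (z ^ 2) *
        (torusPole p q (x ^ 2) + torusPole p q (y ^ 2) - (q - 1)))) =
      (x ^ 2)⁻¹ ^ torusGenus p q * (y ^ 2)⁻¹ ^ torusGenus p q *
        qNumberDefect q ((x ^ 2) ^ p) ((y ^ 2) ^ p) * ((x ^ 2 * y ^ 2) ^ p * (z ^ 2 - 1)) *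
        (qNumber p (z ^ 2) * (torusDelta q p z * torusPole q p (z ^ 2))) := by
    rw [torusDelta_comm q p z]
    linear_combination torusDelta p q z * torusPole q p (z ^ 2) *
      ((torusPole p q (x ^ 2) + torusPole p q (y ^ 2) - (q - 1)) *
        (qNumber q (y ^ 2) * torusDelta p q y * hxΔ +
          (x ^ 2)⁻¹ ^ torusGenus p q * qNumber q ((x ^ 2) ^ p) * hyΔ) +
        (x ^ 2)⁻¹ ^ torusGenus p q * (y ^ 2)⁻¹ ^ torusGenus p q *
          (hpole + qNumberDefect q ((x ^ 2) ^ p) ((y ^ 2) ^ p) * hz_factor))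
  rw [cancel_pole]
  have hxy : (x ^ 2 * y ^ 2) ^ p ∈ R := pow_mem (mul_mem hx.sq_mem hy.sq_mem) _
  have hM := qNumberDefect_mem (pow_mem hx.sq_mem p) (pow_mem hy.sq_mem p) q
  have hunit := mul_mem (pow_mem hx.sq_inv_mem (torusGenus p q))
    (pow_mem hy.sq_inv_mem (torusGenus p q))
  exact mul_mem (mul_mem (mul_mem hunit hM) (mul_mem hxy (sub_mem hz.sq_mem (one_mem R))))
    (qNumber_mul_torusDelta_mul_torusPole_mem hpq.symm hz.swap)

theorem prod_qNumber_mul_torusTheta_mem (h2 : (2 : F) ≠ 0) (hpq : p.Coprime q) {x y z : F}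
    (hx : IsTorusRegular R p q x) (hy : IsTorusRegular R p q y) (hz : IsTorusRegular R p q z)
    (hxyz : x * y * z = 1) :
    qNumber q (x ^ 2) * qNumber q (y ^ 2) * qNumber q (z ^ 2) * torusTheta p q x y z ∈ R := by
  have hQ {s : F} (hs : IsTorusRegular R p q s) := qNumber_mem hs.sq_mem q
  have hQΔ {s : F} (hs : IsTorusRegular R p q s) := qNumber_mul_torusDelta_mem hpq hs
  have hpole {s : F} (hs : IsTorusRegular R p q s) :=
    qNumber_mul_torusDelta_mul_torusPole_mem hpq hs
  have hz_term := torusPole_mul_torusPole_add_mem hpq hx hy hz hxyz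
  have hx_term := torusPole_mul_torusPole_add_mem hpq hy hz hx (by rw [← hxyz]; ring)
  have hy_term := torusPole_mul_torusPole_add_mem hpq hz hx hy (by rw [← hxyz]; ring)
  have hquad := add_mem (add_mem (mul_mem (hQ hx) hx_term) (mul_mem (hQ hy) hy_term))
    (mul_mem (hQ hz) hz_term)
  have hlin := mul_mem (sub_mem (natCast_mem R p) (one_mem R)) (add_mem (add_mem
    (mul_mem (hpole hx) (mul_mem (hQΔ hy) (hQΔ hz)))
    (mul_mem (hpole hy) (mul_mem (hQΔ hz) (hQΔ hx))))
    (mul_mem (hpole hz) (mul_mem (hQΔ hx) (hQΔ hy))))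
  have hconst := mul_mem (natCast_mem R (3 * torusGenus p q))
    (mul_mem (mul_mem (hQΔ hx) (hQΔ hy)) (hQΔ hz))
  have hsum := neg_mem (add_mem (sub_mem hquad hlin) hconst)
  rw [torusTheta_eq h2 hpq hx.ne_zero hy.ne_zero hz.ne_zero hx.pow_ne_one hy.pow_ne_one
    hz.pow_ne_one]
  convert hsum using 1
  push_cast
  ring

theorem torusTheta_mem (h2 : (2 : F) ≠ 0) (hpq : p.Coprime q) {s : Fin 3 → F}
    (hs : ∀ i, IsTorusRegular R p q (s i)) (hprod : s 0 * s 1 * s 2 = 1)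
    (hsep : ∀ i j, AreSeparated R (qNumber p (s i ^ 2)) (qNumber q (s j ^ 2))) :
    torusTheta p q (s 0) (s 1) (s 2) ∈ R := by
  have hQ (n : ℕ) (i : Fin 3) : qNumber n (s i ^ 2) ∈ R := qNumber_mem (hs i).sq_mem n
  have hsep_prod : AreSeparated R (∏ i, qNumber p (s i ^ 2)) (∏ j, qNumber q (s j ^ 2)) :=
    .prod_right (fun j _ ↦ hQ q j) fun j _ ↦
      .symm <| .prod_right (fun i _ ↦ hQ p i) fun i _ ↦ (hsep i j).symm
  apply hsep_prod <;> rw [Fin.prod_univ_three]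
  · rw [torusTheta_comm]
    exact prod_qNumber_mul_torusTheta_mem h2 hpq.symm (hs 0).swap (hs 1).swap (hs 2).swap hprod
  · exact prod_qNumber_mul_torusTheta_mem h2 hpq (hs 0) (hs 1) (hs 2) hprod

end Integrality

section LaurentSubring

open Polynomial

variable {F : Type*} [Field F] {S : Set F} {R : Subring F} {a b c : F}

/-- The ring of Laurent polynomials with integer coefficients in the elements of `S`. -/
def laurentSubring (S : Set F) : Subring F := Subring.closure {x | x ∈ S ∨ x⁻¹ ∈ S}

theorem mem_laurentSubring (ha : a ∈ S) : a ∈ laurentSubring S :=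
  Subring.subset_closure (.inl ha)

theorem inv_mem_laurentSubring (ha : a ∈ S) : a⁻¹ ∈ laurentSubring S :=
  Subring.subset_closure (.inr (by rwa [inv_inv]))

theorem laurentSubring_le (h : ∀ x ∈ S, x ∈ R) (h_inv : ∀ x ∈ S, x⁻¹ ∈ R) :
    laurentSubring S ≤ R := by
  refine Subring.closure_le.2 fun x hx ↦ hx.elim (h x) fun hx ↦ ?_
  simpa using h_inv _ hx

theorem laurentSubring_mono {T : Set F} (h : S ⊆ T) : laurentSubring S ≤ laurentSubring T :=
  laurentSubring_le (fun _ hx ↦ mem_laurentSubring (h hx))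
    fun _ hx ↦ inv_mem_laurentSubring (h hx)

theorem laurentSubring_pair (a b : F) :
    laurentSubring {a, b} = Subring.closure {a, a⁻¹, b, b⁻¹} := by
  rw [laurentSubring]
  congr 1
  ext x
  simp only [Set.mem_ofPred_eq, Set.mem_insert_iff, Set.mem_singleton_iff, inv_eq_iff_eq_inv]
  tauto

theorem laurentSubring_triple (h : a * b * c = 1) :
    laurentSubring {a, b, c} = laurentSubring {a, b} := by
  refine le_antisymm ?_ (laurentSubring_mono (by grind))
  have hc : c = a⁻¹ * b⁻¹ := by rw [← mul_inv, eq_inv_of_mul_eq_one_right h]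
  have mem (x : F) (hx : x ∈ ({a, b} : Set F)) := mem_laurentSubring hx
  have inv_mem (x : F) (hx : x ∈ ({a, b} : Set F)) := inv_mem_laurentSubring hx
  apply laurentSubring_le <;> rintro x (rfl | rfl | rfl)
  · exact mem _ (by simp)
  · exact mem _ (by simp)
  · exact hc ▸ mul_mem (inv_mem _ (by simp)) (inv_mem _ (by simp))
  · exact inv_mem _ (by simp)
  · exact inv_mem _ (by simp)
  · rw [hc, mul_inv, inv_inv, inv_inv]
    exact mul_mem (mem _ (by simp)) (mem _ (by simp))

theorem exists_pow_mul_eq_aeval_of_mem_laurentSubring (hb : b ≠ 0) {r : F}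
    (hr : r ∈ laurentSubring (insert b S)) :
    ∃ (n : ℕ) (f : (laurentSubring S)[X]), b ^ n * r = aeval b f := by
  let eval := LaurentPolynomial.eval₂ (algebraMap (laurentSubring S) F) (Units.mk0 b hb)
  have le_range : laurentSubring (insert b S) ≤ eval.range := by
    apply laurentSubring_le <;> rintro x (rfl | hx)
    · exact ⟨.T 1, by simp [eval]⟩
    · exact ⟨.C ⟨x, mem_laurentSubring hx⟩, LaurentPolynomial.eval₂_C ..⟩
    · exact ⟨.T (-1), by simp [eval]⟩
    · exact ⟨.C ⟨x⁻¹, inv_mem_laurentSubring hx⟩, LaurentPolynomial.eval₂_C ..⟩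
  obtain ⟨g, rfl⟩ := le_range hr
  obtain ⟨n, f, hf⟩ := g.exists_T_pow
  refine ⟨n, f, ?_⟩
  have eval_f : eval (toLaurent f) = aeval b f := LaurentPolynomial.eval₂_toLaurent ..
  rw [← eval_f, hf, map_mul, mul_comm, LaurentPolynomial.eval₂_T_n, Units.val_mk0]

theorem aeval_mem_laurentSubring_insert (f : (laurentSubring S)[X]) :
    aeval b f ∈ laurentSubring (insert b S) := by
  rw [aeval_eq_sum_range]
  exact sum_mem fun i _ ↦ mul_mem (laurentSubring_mono (Set.subset_insert b S) (f.coeff i).2)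
    (pow_mem (mem_laurentSubring (Set.mem_insert b S)) i)

theorem dvd_of_dvd_smul_of_monic {A : Type*} [CommRing A] [NoZeroDivisors A] {d : A} (hd : d ≠ 0)
    {f g : A[X]} (hg : g.Monic) (h : g ∣ d • f) : g ∣ f := by
  rw [← modByMonic_eq_zero_iff_dvd hg] at h ⊢
  rw [smul_modByMonic] at h
  exact (smul_eq_zero.1 h).resolve_left hd

theorem areSeparated_aeval (hb : Transcendental (laurentSubring S) b) {d : laurentSubring S}
    (hd : d ≠ 0) {g : (laurentSubring S)[X]} (hg : g.Monic) :
    AreSeparated (laurentSubring (insert b S)) (d : F) (aeval b g) := by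
  intro x hdx hgx
  have hb0 : b ≠ 0 := fun h ↦ hb (h ▸ isAlgebraic_zero)
  have inj := transcendental_iff_injective.1 hb
  obtain ⟨m, f₁, hf₁⟩ := exists_pow_mul_eq_aeval_of_mem_laurentSubring hb0 hdx
  obtain ⟨n, f₂, hf₂⟩ := exists_pow_mul_eq_aeval_of_mem_laurentSubring hb0 hgx
  have cross : d • (X ^ m * f₂) = g * (X ^ n * f₁) := by
    apply inj
    simp only [map_smul, map_mul, map_pow, aeval_X, ← hf₁, ← hf₂, Subring.smul_def, smul_eq_mul]
    ring
  obtain ⟨f, hf⟩ : g ∣ X ^ m * f₂ := dvd_of_dvd_smul_of_monic hd hg ⟨_, cross⟩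
  have hg0 : aeval b g ≠ 0 := fun h ↦ hg.ne_zero (inj (by simpa using h))
  have hx : x = b⁻¹ ^ (m + n) * aeval b f := by
    rw [inv_pow, eq_inv_mul_iff_mul_eq₀ (pow_ne_zero _ hb0)]
    apply mul_left_cancel₀ hg0
    rw [← map_mul, ← hf, map_mul, ← hf₂, map_pow, aeval_X]
    ring
  rw [hx]
  exact mul_mem (pow_mem (inv_mem_laurentSubring (Set.mem_insert b S)) _)
    (aeval_mem_laurentSubring_insert f)

theorem pow_ne_one_of_transcendental {A : Type*} [CommRing A] [Nontrivial A] [Algebra A F]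
    (ha : Transcendental A a) {n : ℕ} (hn : n ≠ 0) : a ^ n ≠ 1 :=
  fun h ↦ ha.pow (Nat.pos_of_ne_zero hn) (h ▸ isAlgebraic_one)

theorem areSeparated_qNumber_of_transcendental {m n : ℕ} (ha : a ^ m ≠ 1)
    (hb : Transcendental (laurentSubring {a}) b) (hn : n ≠ 0) :
    AreSeparated (laurentSubring {a, b}) (qNumber m a) (qNumber n b) := by
  let d : laurentSubring {a} := qNumber m ⟨a, mem_laurentSubring rfl⟩
  have hd : (d : F) = qNumber m a := map_qNumber (laurentSubring {a}).subtype m _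
  have hd0 : d ≠ 0 := by
    rw [← Subtype.coe_ne_coe, hd]
    exact qNumber_ne_zero ha
  have := areSeparated_aeval hb hd0 (g := qNumber n X) (monic_geom_sum_X hn)
  rwa [← AlgHom.coe_toRingHom, map_qNumber, AlgHom.coe_toRingHom, aeval_X, hd,
    Set.pair_comm] at this

theorem transcendental_laurentSubring_image {ι : Type*} {x : ι → F}
    (hx : AlgebraicIndependent ℤ x) {s : Set ι} {i : ι} (hi : i ∉ s) :
    Transcendental (laurentSubring (x '' s)) (x i) := by
  let K := Subalgebra.algebraicClosure (Algebra.adjoin ℤ (x '' s)) F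
  have adjoin_mem (y : F) (hy : y ∈ x '' s) : y ∈ K :=
    isAlgebraic_algebraMap (⟨y, Algebra.subset_adjoin hy⟩ : Algebra.adjoin ℤ (x '' s))
  have le : laurentSubring (x '' s) ≤ K.toSubring :=
    laurentSubring_le adjoin_mem fun y hy ↦ (adjoin_mem y hy).inv
  have hK : Transcendental K (x i) := (hx.transcendental_adjoin hi).subalgebraAlgebraicClosure
  let _ : Algebra (laurentSubring (x '' s)) K := (Subring.inclusion le).toAlgebra
  have : IsScalarTower (laurentSubring (x '' s)) K F := .of_algebraMap_eq fun _ ↦ rfl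
  exact hK.restrictScalars (Subring.inclusion_injective le)

theorem algebraicIndependent_pair_comm (h : AlgebraicIndependent ℤ ![a, b]) :
    AlgebraicIndependent ℤ ![b, a] := by
  convert h.comp ![1, 0] (by decide) using 1
  ext i
  fin_cases i <;> rfl

theorem algebraicIndependent_pair_sq (h : AlgebraicIndependent ℤ ![a, b]) :
    AlgebraicIndependent ℤ ![a ^ 2, b ^ 2] := by
  convert h.polynomial_aeval_of_transcendental (f := fun _ ↦ X ^ 2)
    (fun _ ↦ (transcendental_X ℤ).pow two_pos) using 1
  ext i
  fin_cases i <;> simp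

theorem transcendental_laurentSubring_singleton (h : AlgebraicIndependent ℤ ![a, b]) :
    Transcendental (laurentSubring {a}) b := by
  have := transcendental_laurentSubring_image h (s := {0}) (i := 1) (by simp)
  rwa [Set.image_singleton] at this

theorem transcendental_laurentSubring_of_mul_mul_eq_one (h : AlgebraicIndependent ℤ ![a, b])
    (habc : a * b * c = 1) : Transcendental (laurentSubring {a}) c := by
  have ha0 : a ≠ 0 := by
    rintro rfl
    simp at habc
  have ha : IsAlgebraic (laurentSubring {a}) a :=
    isAlgebraic_algebraMap (⟨a, mem_laurentSubring rfl⟩ : laurentSubring {a})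
  rw [eq_inv_of_mul_eq_one_right habc]
  intro h_inv
  exact transcendental_laurentSubring_singleton h
    (.of_mul (mem_nonZeroDivisors_of_ne_zero ha0) ha (inv_inv (a * b) ▸ h_inv.inv))

theorem areSeparated_qNumber_of_lt {t : Fin 3 → F} (hprod : t 0 * t 1 * t 2 = 1)
    (ht : AlgebraicIndependent ℤ ![t 0, t 1]) {m n : ℕ} (hm : m ≠ 0) (hn : n ≠ 0) {i j : Fin 3}
    (hij : i < j) :
    AreSeparated (laurentSubring {t 0, t 1, t 2}) (qNumber m (t i)) (qNumber n (t j)) := by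
  have h0 := pow_ne_one_of_transcendental (ht.transcendental 0) hm
  have h1 := pow_ne_one_of_transcendental (ht.transcendental 1) hm
  obtain ⟨rfl, rfl⟩ | ⟨rfl, rfl⟩ | ⟨rfl, rfl⟩ :
      i = 0 ∧ j = 1 ∨ i = 0 ∧ j = 2 ∨ i = 1 ∧ j = 2 := by omega
  · rw [laurentSubring_triple hprod]
    exact areSeparated_qNumber_of_transcendental h0 (transcendental_laurentSubring_singleton ht) hn
  · rw [Set.pair_comm, laurentSubring_triple (by rwa [mul_right_comm])]
    exact areSeparated_qNumber_of_transcendental h0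
      (transcendental_laurentSubring_of_mul_mul_eq_one ht hprod) hn
  · rw [Set.insert_comm, Set.pair_comm, laurentSubring_triple (by rw [← hprod]; ring)]
    exact areSeparated_qNumber_of_transcendental h1
      (transcendental_laurentSubring_of_mul_mul_eq_one (algebraicIndependent_pair_comm ht)
        (by rwa [mul_comm (t 1)])) hn

theorem areSeparated_qNumber_triple {t : Fin 3 → F} (hprod : t 0 * t 1 * t 2 = 1)
    (ht : AlgebraicIndependent ℤ ![t 0, t 1]) {m n : ℕ} (hm : m ≠ 0) (hn : n ≠ 0)
    (hmn : m.Coprime n) (i j : Fin 3) :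
    AreSeparated (laurentSubring {t 0, t 1, t 2}) (qNumber m (t i)) (qNumber n (t j)) := by
  rcases lt_trichotomy i j with hij | rfl | hji
  · exact areSeparated_qNumber_of_lt hprod ht hm hn hij
  · exact areSeparated_qNumber_of_coprime hmn (mem_laurentSubring (by fin_cases i <;> simp))
  · exact (areSeparated_qNumber_of_lt hprod ht hn hm hji).symm

theorem isTorusRegular_of_transcendental {A : Type*} [CommRing A] [Nontrivial A] [Algebra A F]
    {p q : ℕ} (hp : p ≠ 0) (hq : q ≠ 0) {s : F} (hs : Transcendental A s) (hS : s ^ 2 ∈ S) :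
    IsTorusRegular (laurentSubring S) p q s where
  ne_zero h := hs (h ▸ isAlgebraic_zero)
  sq_mem := mem_laurentSubring hS
  sq_inv_mem := inv_mem_laurentSubring hS
  pow_ne_one := pow_ne_one_of_transcendental (hs.pow two_pos) (mul_ne_zero hp hq)

end LaurentSubring

theorem torusTheta_is_integer_laurent_general {F : Type*} [Field F] {p q : ℕ} (hp : p ≠ 0)
    (hq : q ≠ 0) (hpq : p.Coprime q) {s₁ s₂ : F} (hs : AlgebraicIndependent ℤ ![s₁, s₂]) :
    torusTheta p q s₁ s₂ (s₁ * s₂)⁻¹ ∈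
      Subring.closure {s₁ ^ 2, (s₁ ^ 2)⁻¹, s₂ ^ 2, (s₂ ^ 2)⁻¹} := by
  have h₁ : Transcendental ℤ s₁ := hs.transcendental 0
  have h₂ : Transcendental ℤ s₂ := hs.transcendental 1
  have hne : s₁ * s₂ ≠ 0 :=
    mul_ne_zero (fun h ↦ h₁ (h ▸ isAlgebraic_zero)) fun h ↦ h₂ (h ▸ isAlgebraic_zero)
  have hprod : s₁ * s₂ * (s₁ * s₂)⁻¹ = 1 := mul_inv_cancel₀ hne
  have hprod_sq : s₁ ^ 2 * s₂ ^ 2 * (s₁ * s₂)⁻¹ ^ 2 = 1 := by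
    rw [← mul_pow, ← mul_pow, hprod, one_pow]
  have h₃ := transcendental_laurentSubring_of_mul_mul_eq_one hs hprod
  have h2 : (2 : F) ≠ 0 := by
    simpa using hs.algebraMap_injective.ne (two_ne_zero (α := ℤ))
  rw [← laurentSubring_pair, ← laurentSubring_triple hprod_sq]
  refine torusTheta_mem (s := ![s₁, s₂, (s₁ * s₂)⁻¹]) h2 hpq ?_ hprod ?_
  · intro i
    fin_cases i
    exacts [isTorusRegular_of_transcendental hp hq h₁ (by simp),
      isTorusRegular_of_transcendental hp hq h₂ (by simp),
      isTorusRegular_of_transcendental hp hq h₃ (by simp)]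
  · exact areSeparated_qNumber_triple (t := fun i ↦ ![s₁, s₂, (s₁ * s₂)⁻¹] i ^ 2) hprod_sq
      (algebraicIndependent_pair_sq hs) hp hq hpq

theorem algebraicIndependent_int_algebraMap_X (ι K F : Type*) [CommRing K] [CharZero K]
    [CommRing F] [Algebra (MvPolynomial ι K) F] [FaithfulSMul (MvPolynomial ι K) F] :
    AlgebraicIndependent ℤ fun i : ι ↦ algebraMap (MvPolynomial ι K) F (MvPolynomial.X i) := by
  have hX : AlgebraicIndependent ℤ (MvPolynomial.X : ι → MvPolynomial ι K) :=
    (MvPolynomial.algebraicIndependent_X ι K).restrictScalars (RingHom.injective_int _)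
  exact hX.map' (f := (algebraMap (MvPolynomial ι K) F).toIntAlgHom)
    (FaithfulSMul.algebraMap_injective _ _)

/-- For coprime integers `p, q ≥ 2`, the 2-loop polynomial `Θ_{p,q}(s₁, s₂, (s₁s₂)⁻¹)` of
the torus knot `T(p,q)`, a priori an element of the field `ℚ(s₁,s₂)`, lies in the subring
`ℤ[s₁^{±2}, s₂^{±2}]`, i.e. it is a Laurent polynomial in `t₁ = s₁²` and `t₂ = s₂²` with
integer coefficients. -/
theorem torusTheta_is_integer_laurent (p q : ℕ) (hp : 2 ≤ p) (hq : 2 ≤ q)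
    (hpq : Nat.Coprime p q) :
    ∀ (s₁ s₂ : FractionRing (MvPolynomial (Fin 2) ℚ)),
      s₁ = algebraMap (MvPolynomial (Fin 2) ℚ) _ (MvPolynomial.X 0) →
      s₂ = algebraMap (MvPolynomial (Fin 2) ℚ) _ (MvPolynomial.X 1) →
      torusTheta p q s₁ s₂ (s₁ * s₂)⁻¹ ∈
        Subring.closure {s₁ ^ 2, (s₁ ^ 2)⁻¹, s₂ ^ 2, (s₂ ^ 2)⁻¹} := by
  rintro _ _ rfl rfl
  have hX := algebraicIndependent_int_algebraMap_X (Fin 2) ℚ (FractionRing (MvPolynomial (Fin 2) ℚ))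
  rw [← FinVec.etaExpand_eq fun i : Fin 2 ↦ algebraMap _ _ (MvPolynomial.X i)] at hX
  exact torusTheta_is_integer_laurent_general (by omega) (by omega) hpq hX
end

section
/- Let p ≥ 2 be an integer coprime to 3. In ℚ(s₁, s₂), writing t_i = s_i² and s₃ = (s₁s₂)^{−1}, t₃ = s₃², the following identity holds: Θ_{p,3}(s₁, s₂, s₃) = ((t₁−1)(t₂−1)(t₃−1)/((t₁³−1)(t₂³−1)(t₃³−1))) · ( (p−1)·( t₁^p + t₁^{−p} + t₂^p + t₂^{−p} + t₃^p + t₃^{−p} + t₁^{2p} + t₁^{−2p} + t₂^{2p} + t₂^{−2p} + t₃^{2p} + t₃^{−2p} + t₁^{2p}t₂^p + t₁^{−2p}t₂^{−p} + t₁^{p}t₂^{2p} + t₁^{−p}t₂^{−2p} + t₁^{p}t₂^{−p} + t₁^{−p}t₂^{p} ) − ((s₁^{3(p−1)} − s₁^{−3(p−1)})/(s₁³ − s₁^{−3}))·(2s₁^p + 2s₁^{−p} + s₂^p s₃^{−p} + s₂^{−p} s₃^{p}) − ((s₂^{3(p−1)} − s₂^{−3(p−1)})/(s₂³ − s₂^{−3}))·(2s₂^p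 + 2s₂^{−p} + s₁^p s₃^{−p} + s₁^{−p} s₃^{p}) − ((s₃^{3(p−1)} − s₃^{−3(p−1)})/(s₃³ − s₃^{−3}))·(2s₃^p + 2s₃^{−p} + s₁^p s₂^{−p} + s₁^{−p} s₂^{p}) ). -/
/-!
Write `[n]_x = (xⁿ − x⁻ⁿ)/(x − x⁻¹)`. Then `Δ_{p,q}(s) = [q]_{s^p}/[q]_s`, and `ψ_{p,q}(s)` is
`2[q−1]_{s^p} − (q−1)(s^{pq} + s^{−pq})` times `(s − s⁻¹)/((s^p − s^{−p})(s^q − s^{−q}))`.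
Group the six terms of `Θ_{p,3}` by the argument `s_j` of `ψ_{3,p}`. Since `s₁s₂s₃ = 1`, the sum of
the two products of `ψ_{p,3}` and `Δ_{p,3}` at the other two arguments is divisible by
`s_j^p − s_j^{−p}`, which cancels that factor in the denominator of `ψ_{3,p}(s_j)`.
-/

section QuantumIntegers

variable {F : Type*} [Field F]

/-- The quantum integer `[n]_x = (xⁿ − x⁻ⁿ)/(x − x⁻¹)`, in terms of which both the Alexander
polynomial of a torus knot and the coefficients of its 2-loop polynomial are expressed. It takes
the junk value `0` at `x = ±1`. -/
def quantumInt (n : ℕ) (x : F) : F :=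
  (x ^ n - x⁻¹ ^ n) / (x - x⁻¹)

theorem quantumInt_pow (m n : ℕ) (x : F) :
    quantumInt n (x ^ m) = (x ^ (m * n) - x⁻¹ ^ (m * n)) / (x ^ m - x⁻¹ ^ m) := by
  simp only [quantumInt, inv_pow, pow_mul]

theorem quantumInt_two {x : F} (hx : x - x⁻¹ ≠ 0) : quantumInt 2 x = x + x⁻¹ := by
  rw [quantumInt, div_eq_iff hx]
  ring

theorem ne_zero_of_sub_inv_ne_zero {x : F} (hx : x - x⁻¹ ≠ 0) : x ≠ 0 := by
  rintro rfl
  simp at hx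

theorem quantumInt_three {x : F} (hx : x - x⁻¹ ≠ 0) :
    quantumInt 3 x = x ^ 2 + 1 + x⁻¹ ^ 2 := by
  have hx₀ := ne_zero_of_sub_inv_ne_zero hx
  rw [quantumInt, div_eq_iff hx]
  field_simp
  ring

theorem quantumInt_mul_add_inv {n : ℕ} (hn : n ≠ 0) {x : F} (hx : x - x⁻¹ ≠ 0) :
    quantumInt n x * (x + x⁻¹) = 2 * quantumInt (n - 1) x + (x ^ n + x⁻¹ ^ n) := by
  have hxx : x * x⁻¹ = 1 := mul_inv_cancel₀ (ne_zero_of_sub_inv_ne_zero hx)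
  obtain ⟨k, rfl⟩ := Nat.exists_eq_add_one_of_ne_zero hn
  rw [Nat.add_sub_cancel, quantumInt, quantumInt, div_mul_eq_mul_div, mul_div_assoc',
    div_add' _ _ _ hx]
  congr 1
  linear_combination 2 * (x ^ k - x⁻¹ ^ k) * hxx

theorem sub_one_div_pow_three_sub_one {s : F} (hs : s ≠ 0) :
    (s ^ 2 - 1) / ((s ^ 2) ^ 3 - 1) = (s ^ 2 * quantumInt 3 s)⁻¹ := by
  have h₁ : s ^ 2 - 1 = s * (s - s⁻¹) := by field_simp
  have h₃ : (s ^ 2) ^ 3 - 1 = s * (s ^ 2 * (s ^ 3 - s⁻¹ ^ 3)) := by field_simp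
  rw [h₁, h₃, mul_div_mul_left _ _ hs, quantumInt, mul_div_assoc', inv_div]

theorem prod_sub_one_div_prod_pow_three_sub_one {s₁ s₂ s₃ : F} (h : s₁ * s₂ * s₃ = 1) :
    (s₁ ^ 2 - 1) * (s₂ ^ 2 - 1) * (s₃ ^ 2 - 1) /
        (((s₁ ^ 2) ^ 3 - 1) * ((s₂ ^ 2) ^ 3 - 1) * ((s₃ ^ 2) ^ 3 - 1)) =
      (quantumInt 3 s₁ * quantumInt 3 s₂ * quantumInt 3 s₃)⁻¹ := by
  have h₁₂ : s₁ * s₂ ≠ 0 := left_ne_zero_of_mul_eq_one h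
  rw [mul_div_mul_comm, mul_div_mul_comm,
    sub_one_div_pow_three_sub_one (left_ne_zero_of_mul h₁₂),
    sub_one_div_pow_three_sub_one (right_ne_zero_of_mul h₁₂),
    sub_one_div_pow_three_sub_one (right_ne_zero_of_mul_eq_one h), ← mul_inv, ← mul_inv]
  congr 1
  linear_combination
    quantumInt 3 s₁ * quantumInt 3 s₂ * quantumInt 3 s₃ * (s₁ * s₂ * s₃ + 1) * h

theorem pow_sub_inv_pow_ne_zero_of_dvd {m n : ℕ} (hmn : m ∣ n) {s : F}
    (hs : s ^ n - s⁻¹ ^ n ≠ 0) : s ^ m - s⁻¹ ^ m ≠ 0 := by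
  obtain ⟨k, rfl⟩ := hmn
  rw [pow_mul, pow_mul] at hs
  exact ne_zero_of_dvd_ne_zero hs (sub_dvd_pow_sub_pow _ _ k)

theorem pow_sub_inv_pow_ne_zero {n : ℕ} {s : F} (hs₀ : s ≠ 0) (hs : s ^ (2 * n) ≠ 1) :
    s ^ n - s⁻¹ ^ n ≠ 0 := by
  contrapose! hs
  rw [inv_pow, sub_eq_zero] at hs
  rw [two_mul, pow_add]
  nth_rw 2 [hs]
  exact mul_inv_cancel₀ (pow_ne_zero n hs₀)

end QuantumIntegers

section TorusKnots

variable {F : Type*} [Field F]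

theorem torusDelta_eq_quantumInt_div (p q : ℕ) (s : F) :
    torusDelta p q s = quantumInt q (s ^ p) / quantumInt q s := by
  rw [torusDelta, quantumInt_pow, quantumInt, div_div_div_eq]

theorem torusPsi_eq {p q : ℕ} {s : F} (hs : s ^ (p * q) - s⁻¹ ^ (p * q) ≠ 0) :
    torusPsi p q s = (s - s⁻¹) / ((s ^ p - s⁻¹ ^ p) * (s ^ q - s⁻¹ ^ q)) *
      (2 * quantumInt (q - 1) (s ^ p) - (q - 1) * (s ^ (p * q) + s⁻¹ ^ (p * q))) := by
  have hp : s ^ p - (s ^ p)⁻¹ ≠ 0 := by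
    simpa only [inv_pow] using pow_sub_inv_pow_ne_zero_of_dvd (dvd_mul_right p q) hs
  have hq : q ≠ 0 := by
    rintro rfl
    simp at hs
  have hquantum := quantumInt_mul_add_inv hq hp
  rw [quantumInt_pow, ← inv_pow, ← pow_mul, ← pow_mul] at hquantum
  calc torusPsi p q s
    _ = (s - s⁻¹) / ((s ^ p - s⁻¹ ^ p) * (s ^ q - s⁻¹ ^ q)) *
          ((s ^ (p * q) - s⁻¹ ^ (p * q)) / (s ^ p - s⁻¹ ^ p) * (s ^ p + s⁻¹ ^ p) -
            q * ((s ^ (p * q) - s⁻¹ ^ (p * q)) *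
              ((s ^ (p * q) + s⁻¹ ^ (p * q)) / (s ^ (p * q) - s⁻¹ ^ (p * q))))) := by
      rw [torusPsi, torusDelta, torusPhi]
      ring
    _ = (s - s⁻¹) / ((s ^ p - s⁻¹ ^ p) * (s ^ q - s⁻¹ ^ q)) *
          (2 * quantumInt (q - 1) (s ^ p) + (s ^ (p * q) + s⁻¹ ^ (p * q)) -
            q * (s ^ (p * q) + s⁻¹ ^ (p * q))) := by
      rw [hquantum, mul_div_cancel₀ _ hs]
    _ = (s - s⁻¹) / ((s ^ p - s⁻¹ ^ p) * (s ^ q - s⁻¹ ^ q)) *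
          (2 * quantumInt (q - 1) (s ^ p) - (q - 1) * (s ^ (p * q) + s⁻¹ ^ (p * q))) := by
      ring

theorem torusPsi_three_left_mul_sub {p : ℕ} {s : F} (hs : s ^ (3 * p) - s⁻¹ ^ (3 * p) ≠ 0) :
    torusPsi 3 p s * (s ^ p - s⁻¹ ^ p) =
      (2 * quantumInt (p - 1) (s ^ 3) - (p - 1) * (s ^ (3 * p) + s⁻¹ ^ (3 * p))) /
        quantumInt 3 s := by
  have hsp := pow_sub_inv_pow_ne_zero_of_dvd (dvd_mul_left p 3) hs
  have hthree : quantumInt 3 s = (s ^ 3 - s⁻¹ ^ 3) / (s - s⁻¹) := rfl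
  rw [torusPsi_eq hs, mul_right_comm, ← div_div, div_mul_cancel₀ _ hsp, hthree,
    div_div_eq_mul_div, div_mul_eq_mul_div, mul_comm (s - s⁻¹)]

theorem torusPsi_three_right {p : ℕ} {s : F} (hs : s ^ (3 * p) - s⁻¹ ^ (3 * p) ≠ 0) :
    torusPsi p 3 s = -2 * (s ^ (2 * p) - s⁻¹ ^ (2 * p)) / quantumInt 3 s := by
  have hsp := pow_sub_inv_pow_ne_zero_of_dvd (dvd_mul_left p 3) hs
  have hthree : quantumInt 3 s = (s ^ 3 - s⁻¹ ^ 3) / (s - s⁻¹) := rfl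
  rw [torusPsi_eq (by rwa [mul_comm]), mul_comm p 3, hthree, div_div_eq_mul_div]
  simp only [inv_pow s p, pow_mul'] at *
  generalize s ^ p = a at *
  have ha : a * a⁻¹ = 1 := mul_inv_cancel₀ (ne_zero_of_sub_inv_ne_zero hsp)
  have hfactor : 2 * quantumInt (3 - 1) a - ((3 : ℕ) - 1) * (a ^ 3 + a⁻¹ ^ 3) =
      (a - a⁻¹) * (-2 * (a ^ 2 - a⁻¹ ^ 2)) := by
    rw [quantumInt_two hsp]
    push_cast
    linear_combination -2 * (a + a⁻¹) * ha
  rw [hfactor, div_mul_eq_mul_div, mul_left_comm, mul_div_mul_left _ _ hsp, mul_comm (s - s⁻¹)]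

/-- The Laurent polynomial `2a + 2a⁻¹ + b/c + c/b`. At `(a, b, c) = (s₁ ^ p, s₂ ^ p, s₃ ^ p)` it is
the coefficient of `-[p-1]_{s₁³}` in `[3]_{s₁}[3]_{s₂}[3]_{s₃}` times the 2-loop polynomial of
`T(p,3)`. -/
def torusCross (a b c : F) : F :=
  2 * a + 2 * a⁻¹ + b * c⁻¹ + b⁻¹ * c

theorem sq_sub_inv_sq_mul_add_eq_neg_mul_torusCross {a b c : F} (h : a * b * c = 1) :
    (b ^ 2 - b⁻¹ ^ 2) * (c ^ 2 + 1 + c⁻¹ ^ 2) + (c ^ 2 - c⁻¹ ^ 2) * (b ^ 2 + 1 + b⁻¹ ^ 2) =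
      -((a - a⁻¹) * torusCross a b c) := by
  have hc : c ≠ 0 := right_ne_zero_of_mul_eq_one h
  have hb : b ≠ 0 := right_ne_zero_of_mul (left_ne_zero_of_mul_eq_one h)
  obtain rfl : a = (b * c)⁻¹ := eq_inv_of_mul_eq_one_left (by rw [← mul_assoc, h])
  rw [torusCross]
  field_simp
  ring

theorem sum_cube_add_inv_cube_mul_torusCross {a b c : F} (h : a * b * c = 1) :
    (a ^ 3 + a⁻¹ ^ 3) * torusCross a b c + (b ^ 3 + b⁻¹ ^ 3) * torusCross b a c +
        (c ^ 3 + c⁻¹ ^ 3) * torusCross c a b =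
      2 * (a ^ 2 + a⁻¹ ^ 2 + b ^ 2 + b⁻¹ ^ 2 + c ^ 2 + c⁻¹ ^ 2
        + a ^ 4 + a⁻¹ ^ 4 + b ^ 4 + b⁻¹ ^ 4 + c ^ 4 + c⁻¹ ^ 4
        + a ^ 4 * b ^ 2 + a⁻¹ ^ 4 * b⁻¹ ^ 2 + a ^ 2 * b ^ 4 + a⁻¹ ^ 2 * b⁻¹ ^ 4
        + a ^ 2 * b⁻¹ ^ 2 + a⁻¹ ^ 2 * b ^ 2) := by
  have hab : a * b ≠ 0 := left_ne_zero_of_mul_eq_one h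
  have ha : a ≠ 0 := left_ne_zero_of_mul hab
  have hb : b ≠ 0 := right_ne_zero_of_mul hab
  obtain rfl : c = (a * b)⁻¹ := eq_inv_of_mul_eq_one_right h
  simp only [torusCross]
  field_simp
  ring

theorem torusPsi_mul_torusDelta_add {p : ℕ} {x y z : F} (h : x * y * z = 1)
    (hy : y ^ (3 * p) - y⁻¹ ^ (3 * p) ≠ 0) (hz : z ^ (3 * p) - z⁻¹ ^ (3 * p) ≠ 0) :
    torusPsi p 3 y * torusDelta p 3 z + torusPsi p 3 z * torusDelta p 3 y =
      2 * (x ^ p - x⁻¹ ^ p) * torusCross (x ^ p) (y ^ p) (z ^ p) /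
        (quantumInt 3 y * quantumInt 3 z) := by
  have hyp : y ^ p - (y ^ p)⁻¹ ≠ 0 := by
    simpa only [inv_pow] using pow_sub_inv_pow_ne_zero_of_dvd (dvd_mul_left p 3) hy
  have hzp : z ^ p - (z ^ p)⁻¹ ≠ 0 := by
    simpa only [inv_pow] using pow_sub_inv_pow_ne_zero_of_dvd (dvd_mul_left p 3) hz
  have hfactor := sq_sub_inv_sq_mul_add_eq_neg_mul_torusCross
    (show x ^ p * y ^ p * z ^ p = 1 by rw [← mul_pow, ← mul_pow, h, one_pow])
  rw [torusPsi_three_right hy, torusPsi_three_right hz, torusDelta_eq_quantumInt_div,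
    torusDelta_eq_quantumInt_div, quantumInt_three hyp, quantumInt_three hzp]
  simp only [inv_pow, pow_mul'] at *
  linear_combination (-2 / (quantumInt 3 y * quantumInt 3 z)) * hfactor

theorem torusPsi_mul_torusPsi_mul_torusDelta_add {p : ℕ} {x y z : F} (h : x * y * z = 1)
    (hx : x ^ (3 * p) - x⁻¹ ^ (3 * p) ≠ 0) (hy : y ^ (3 * p) - y⁻¹ ^ (3 * p) ≠ 0)
    (hz : z ^ (3 * p) - z⁻¹ ^ (3 * p) ≠ 0) :
    torusPsi 3 p x * (torusPsi p 3 y * torusDelta p 3 z + torusPsi p 3 z * torusDelta p 3 y) =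
      (quantumInt 3 x * quantumInt 3 y * quantumInt 3 z)⁻¹ *
        (2 * (2 * quantumInt (p - 1) (x ^ 3) - (p - 1) * (x ^ (3 * p) + x⁻¹ ^ (3 * p))) *
          torusCross (x ^ p) (y ^ p) (z ^ p)) := by
  rw [torusPsi_mul_torusDelta_add h hy hz]
  linear_combination (2 * torusCross (x ^ p) (y ^ p) (z ^ p) / (quantumInt 3 y * quantumInt 3 z)) *
    torusPsi_three_left_mul_sub hx

theorem four_mul_torusTheta [NeZero (2 : F)] (p q : ℕ) (s₁ s₂ s₃ : F) :
    4 * torusTheta p q s₁ s₂ s₃ =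
      -(torusPsi q p s₁ *
          (torusPsi p q s₂ * torusDelta p q s₃ + torusPsi p q s₃ * torusDelta p q s₂)
        + torusPsi q p s₂ *
          (torusPsi p q s₁ * torusDelta p q s₃ + torusPsi p q s₃ * torusDelta p q s₁)
        + torusPsi q p s₃ *
          (torusPsi p q s₁ * torusDelta p q s₂ + torusPsi p q s₂ * torusDelta p q s₁)) := by
  have h4 : (4 : F) ≠ 0 := by
    convert mul_ne_zero (two_ne_zero (α := F)) two_ne_zero
    norm_num
  rw [torusTheta, ← mul_assoc, mul_neg, mul_one_div_cancel h4]
  ring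

theorem two_mul_torusTheta_three [NeZero (2 : F)] {p : ℕ} {s₁ s₂ s₃ : F} (h : s₁ * s₂ * s₃ = 1)
    (h₁ : s₁ ^ (3 * p) - s₁⁻¹ ^ (3 * p) ≠ 0) (h₂ : s₂ ^ (3 * p) - s₂⁻¹ ^ (3 * p) ≠ 0)
    (h₃ : s₃ ^ (3 * p) - s₃⁻¹ ^ (3 * p) ≠ 0) :
    2 * torusTheta p 3 s₁ s₂ s₃ =
      (quantumInt 3 s₁ * quantumInt 3 s₂ * quantumInt 3 s₃)⁻¹ *
        (((p - 1) * (s₁ ^ (3 * p) + s₁⁻¹ ^ (3 * p)) - 2 * quantumInt (p - 1) (s₁ ^ 3)) *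
            torusCross (s₁ ^ p) (s₂ ^ p) (s₃ ^ p)
          + ((p - 1) * (s₂ ^ (3 * p) + s₂⁻¹ ^ (3 * p)) - 2 * quantumInt (p - 1) (s₂ ^ 3)) *
            torusCross (s₂ ^ p) (s₁ ^ p) (s₃ ^ p)
          + ((p - 1) * (s₃ ^ (3 * p) + s₃⁻¹ ^ (3 * p)) - 2 * quantumInt (p - 1) (s₃ ^ 3)) *
            torusCross (s₃ ^ p) (s₁ ^ p) (s₂ ^ p)) := by
  have term₁ := torusPsi_mul_torusPsi_mul_torusDelta_add h h₁ h₂ h₃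
  have term₂ := torusPsi_mul_torusPsi_mul_torusDelta_add (mul_comm s₁ s₂ ▸ h) h₂ h₁ h₃
  have term₃ := torusPsi_mul_torusPsi_mul_torusDelta_add
    (x := s₃) (y := s₁) (z := s₂) (by rw [← h]; ring) h₃ h₁ h₂
  apply mul_left_cancel₀ (two_ne_zero (α := F))
  linear_combination four_mul_torusTheta p 3 s₁ s₂ s₃ - term₁ - term₂ - term₃

theorem torusTheta_p3_formula_general [NeZero (2 : F)] {p : ℕ} {s₁ s₂ s₃ t₁ t₂ t₃ : F}
    (h : s₁ * s₂ * s₃ = 1) (ht₁ : t₁ = s₁ ^ 2) (ht₂ : t₂ = s₂ ^ 2) (ht₃ : t₃ = s₃ ^ 2)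
    (h₁ : s₁ ^ (6 * p) ≠ 1) (h₂ : s₂ ^ (6 * p) ≠ 1) (h₃ : s₃ ^ (6 * p) ≠ 1) :
    torusTheta p 3 s₁ s₂ s₃ =
      ((t₁ - 1) * (t₂ - 1) * (t₃ - 1) /
          ((t₁ ^ 3 - 1) * (t₂ ^ 3 - 1) * (t₃ ^ 3 - 1))) *
        (((p : F) - 1) *
            (t₁ ^ p + t₁⁻¹ ^ p + t₂ ^ p + t₂⁻¹ ^ p + t₃ ^ p + t₃⁻¹ ^ p
              + t₁ ^ (2 * p) + t₁⁻¹ ^ (2 * p) + t₂ ^ (2 * p) + t₂⁻¹ ^ (2 * p)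
              + t₃ ^ (2 * p) + t₃⁻¹ ^ (2 * p)
              + t₁ ^ (2 * p) * t₂ ^ p + t₁⁻¹ ^ (2 * p) * t₂⁻¹ ^ p
              + t₁ ^ p * t₂ ^ (2 * p) + t₁⁻¹ ^ p * t₂⁻¹ ^ (2 * p)
              + t₁ ^ p * t₂⁻¹ ^ p + t₁⁻¹ ^ p * t₂ ^ p) -
          ((s₁ ^ (3 * (p - 1)) - s₁⁻¹ ^ (3 * (p - 1))) / (s₁ ^ 3 - s₁⁻¹ ^ 3)) *
            (2 * s₁ ^ p + 2 * s₁⁻¹ ^ p + s₂ ^ p * s₃⁻¹ ^ p + s₂⁻¹ ^ p * s₃ ^ p) -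
          ((s₂ ^ (3 * (p - 1)) - s₂⁻¹ ^ (3 * (p - 1))) / (s₂ ^ 3 - s₂⁻¹ ^ 3)) *
            (2 * s₂ ^ p + 2 * s₂⁻¹ ^ p + s₁ ^ p * s₃⁻¹ ^ p + s₁⁻¹ ^ p * s₃ ^ p) -
          ((s₃ ^ (3 * (p - 1)) - s₃⁻¹ ^ (3 * (p - 1))) / (s₃ ^ 3 - s₃⁻¹ ^ 3)) *
            (2 * s₃ ^ p + 2 * s₃⁻¹ ^ p + s₁ ^ p * s₂⁻¹ ^ p + s₁⁻¹ ^ p * s₂ ^ p)) := by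
  subst ht₁ ht₂ ht₃
  have h₁₂ : s₁ * s₂ ≠ 0 := left_ne_zero_of_mul_eq_one h
  have nondegenerate {s : F} (hs₀ : s ≠ 0) (hs : s ^ (6 * p) ≠ 1) :
      s ^ (3 * p) - s⁻¹ ^ (3 * p) ≠ 0 :=
    pow_sub_inv_pow_ne_zero hs₀ (by convert hs using 2; ring)
  have laurent := sum_cube_add_inv_cube_mul_torusCross
    (show s₁ ^ p * s₂ ^ p * s₃ ^ p = 1 by rw [← mul_pow, ← mul_pow, h, one_pow])
  apply mul_left_cancel₀ (two_ne_zero (α := F))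
  rw [prod_sub_one_div_prod_pow_three_sub_one h,
    two_mul_torusTheta_three h (nondegenerate (left_ne_zero_of_mul h₁₂) h₁)
      (nondegenerate (right_ne_zero_of_mul h₁₂) h₂)
      (nondegenerate (right_ne_zero_of_mul_eq_one h) h₃)]
  simp only [quantumInt_pow, torusCross, inv_pow] at laurent ⊢
  linear_combination (quantumInt 3 s₁ * quantumInt 3 s₂ * quantumInt 3 s₃)⁻¹ * (p - 1) * laurent

end TorusKnots

section MvPolynomials

variable {R σ K : Type*} [CommSemiring R] [Nontrivial R]

theorem algebraMap_monomial_pow_ne_one [Semiring K] [Algebra (MvPolynomial σ R) K]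
    [FaithfulSMul (MvPolynomial σ R) K] {m : σ →₀ ℕ} (hm : m ≠ 0) {n : ℕ} (hn : n ≠ 0) :
    algebraMap (MvPolynomial σ R) K (MvPolynomial.monomial m 1) ^ n ≠ 1 := by
  rw [← map_pow, MvPolynomial.monomial_pow, one_pow, Ne, FaithfulSMul.algebraMap_eq_one_iff,
    ← MvPolynomial.C_1, ← MvPolynomial.monomial_zero', MvPolynomial.monomial_left_inj one_ne_zero]
  exact smul_ne_zero hn hm

theorem algebraMap_X_pow_ne_one [Semiring K] [Algebra (MvPolynomial σ R) K]
    [FaithfulSMul (MvPolynomial σ R) K] (i : σ) {n : ℕ} (hn : n ≠ 0) :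
    algebraMap (MvPolynomial σ R) K (MvPolynomial.X i) ^ n ≠ 1 :=
  algebraMap_monomial_pow_ne_one (Finsupp.single_ne_zero.mpr one_ne_zero) hn

theorem inv_algebraMap_X_mul_X_pow_ne_one [Field K] [Algebra (MvPolynomial σ R) K]
    [FaithfulSMul (MvPolynomial σ R) K] (i j : σ) {n : ℕ} (hn : n ≠ 0) :
    (algebraMap (MvPolynomial σ R) K (MvPolynomial.X i) *
      algebraMap (MvPolynomial σ R) K (MvPolynomial.X j))⁻¹ ^ n ≠ 1 := by
  rw [inv_pow, Ne, inv_eq_one, ← map_mul, MvPolynomial.X, MvPolynomial.X,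
    MvPolynomial.monomial_mul, one_mul]
  exact algebraMap_monomial_pow_ne_one (by simp) hn

end MvPolynomials

/-- Example: the 2-loop polynomial of the `(p,3)` torus knot, for `p ≥ 2` coprime to `3`,
as an explicit rational expression in `t_i = s_i²` (with `s₃ = (s₁s₂)⁻¹`). -/
theorem torusTheta_p3_formula (p : ℕ) (hp : 2 ≤ p) (hp3 : Nat.Coprime p 3) :
    ∀ s₁ s₂ : FractionRing (MvPolynomial (Fin 2) ℚ),
      s₁ = algebraMap (MvPolynomial (Fin 2) ℚ) _ (MvPolynomial.X 0) →
      s₂ = algebraMap (MvPolynomial (Fin 2) ℚ) _ (MvPolynomial.X 1) →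
      ∀ s₃ t₁ t₂ t₃ : FractionRing (MvPolynomial (Fin 2) ℚ),
        s₃ = (s₁ * s₂)⁻¹ → t₁ = s₁ ^ 2 → t₂ = s₂ ^ 2 → t₃ = s₃ ^ 2 →
        torusTheta p 3 s₁ s₂ s₃ =
          ((t₁ - 1) * (t₂ - 1) * (t₃ - 1) /
              ((t₁ ^ 3 - 1) * (t₂ ^ 3 - 1) * (t₃ ^ 3 - 1))) *
            (((p : FractionRing (MvPolynomial (Fin 2) ℚ)) - 1) *
                (t₁ ^ p + t₁⁻¹ ^ p + t₂ ^ p + t₂⁻¹ ^ p + t₃ ^ p + t₃⁻¹ ^ p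
                  + t₁ ^ (2 * p) + t₁⁻¹ ^ (2 * p) + t₂ ^ (2 * p) + t₂⁻¹ ^ (2 * p)
                  + t₃ ^ (2 * p) + t₃⁻¹ ^ (2 * p)
                  + t₁ ^ (2 * p) * t₂ ^ p + t₁⁻¹ ^ (2 * p) * t₂⁻¹ ^ p
                  + t₁ ^ p * t₂ ^ (2 * p) + t₁⁻¹ ^ p * t₂⁻¹ ^ (2 * p)
                  + t₁ ^ p * t₂⁻¹ ^ p + t₁⁻¹ ^ p * t₂ ^ p) -
              ((s₁ ^ (3 * (p - 1)) - s₁⁻¹ ^ (3 * (p - 1))) / (s₁ ^ 3 - s₁⁻¹ ^ 3)) *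
                (2 * s₁ ^ p + 2 * s₁⁻¹ ^ p + s₂ ^ p * s₃⁻¹ ^ p + s₂⁻¹ ^ p * s₃ ^ p) -
              ((s₂ ^ (3 * (p - 1)) - s₂⁻¹ ^ (3 * (p - 1))) / (s₂ ^ 3 - s₂⁻¹ ^ 3)) *
                (2 * s₂ ^ p + 2 * s₂⁻¹ ^ p + s₁ ^ p * s₃⁻¹ ^ p + s₁⁻¹ ^ p * s₃ ^ p) -
              ((s₃ ^ (3 * (p - 1)) - s₃⁻¹ ^ (3 * (p - 1))) / (s₃ ^ 3 - s₃⁻¹ ^ 3)) *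
                (2 * s₃ ^ p + 2 * s₃⁻¹ ^ p + s₁ ^ p * s₂⁻¹ ^ p + s₁⁻¹ ^ p * s₂ ^ p)) := by
  rintro s₁ s₂ rfl rfl s₃ t₁ t₂ t₃ rfl ht₁ ht₂ ht₃
  exact torusTheta_p3_formula_general (mul_inv_cancel₀ (by simp)) ht₁ ht₂ ht₃
    (algebraMap_X_pow_ne_one 0 (by lia)) (algebraMap_X_pow_ne_one 1 (by lia))
    (inv_algebraMap_X_mul_X_pow_ne_one 0 1 (by lia))
end
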